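/- There exists a constant M > 0, depending only on A and C₀, such that for every t ≥ 0 one has β ∫₀ᵗ ∫_ℝ |u(s,x)| · |∂ₓu(s,x)| · |∂ₓ²u(s,x)| dx ds ≤ M ε. -/

import Mathlib

open MeasureTheory

/-!
Write the equation as `∂ₜu = N(u)`. The energy `∫ u² + β (∂ₓu)²` decays at the rate
`2 ε ∫ (∂ₓu)² + β (∂ₓ²u)²`, and it controls `√β u²`. Hence `β ∫∫ |u ∂ₓu ∂ₓ²u|` is bounded
independently of `ε`, which settles the case of `ε` bounded below.

For small `ε`, consider `F = l² ∫ u⁴ + ε² ∫ (∂ₓu)²` with `|A| ≤ l`. As long as `F` is bounded,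
`ε u²` is bounded, so `β ≲ ε⁴` makes the dispersive terms of `F'` absorbable in the dissipation
`12 l² ε ∫ u² (∂ₓu)² + 2 ε³ ∫ (∂ₓ²u)²`, with `l ε² ∫ |u ∂ₓu ∂ₓ²u|` to spare. So `F` decreases, the
bound on `F` persists by a continuity argument, and integrating in time gives
`l ε² ∫∫ |u ∂ₓu ∂ₓ²u| ≤ F(0)`; it remains to multiply by `β ε⁻² ≲ ε²`.
-/

namespace KudryashovSinelshchikov

open Set Function

section Calculus

theorem le_of_deriv_right_nonpos_of_le {f f' : ℝ → ℝ} {a b L L' : ℝ} (hL : L < L')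
    (hf : ContinuousOn f (Icc a b)) (hf' : ∀ x ∈ Ico a b, HasDerivWithinAt f (f' x) (Ici x) x)
    (ha : f a ≤ L) (hnonpos : ∀ x ∈ Ico a b, f x ≤ L' → f' x ≤ 0) {x : ℝ} (hx : x ∈ Icc a b) :
    f x ≤ L := by
  refine le_of_forall_gt_imp_ge_of_dense fun c hc => ?_
  set d := min c L'
  have hd : L < d := lt_min hc hL
  have hab : a ≤ b := hx.1.trans hx.2
  set r := (d - L) / (b - a + 1)
  have hr : 0 < r := div_pos (by linarith) (by linarith)
  -- Fence `f` by a line of slope `r > 0` lying below `L'`: where `f` meets it, `f' ≤ 0 < r`.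
  have line_le : ∀ y ≤ b, L + r * (y - a) ≤ d := fun y hy => by
    have : r * (y - a) ≤ r * (b - a + 1) := by gcongr; linarith
    rw [div_mul_cancel₀ _ (by linarith)] at this
    linarith
  have f_le_line := image_le_of_deriv_right_lt_deriv_boundary (B := fun y => L + r * (y - a))
    (B' := fun _ => r) hf hf' (by simpa using ha)
    (fun y => by simpa using (((hasDerivAt_id y).sub_const a).const_mul r).const_add L)
    (fun y hy hfy =>
      (hnonpos y hy (hfy ▸ (line_le y hy.2.le).trans (min_le_right c L'))).trans_lt hr)
  exact (f_le_line hx).trans ((line_le x hx.2).trans (min_le_left c L'))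

theorem deriv_eq_zero_of_notMem {f : ℝ → ℝ} {K : Set ℝ} (hK : IsClosed K) (hf : ∀ x ∉ K, f x = 0) :
    ∀ x ∉ K, deriv f x = 0 := fun x hx => by
  have : f =ᶠ[nhds x] fun _ => 0 := Filter.mem_of_superset (hK.isOpen_compl.mem_nhds hx) hf
  rw [this.deriv_eq, deriv_const]

theorem integral_le_sub_of_hasDerivAt_le_neg {f f' g : ℝ → ℝ} {a b : ℝ} (hab : a ≤ b)
    (hf : ∀ x ∈ Icc a b, HasDerivAt f (f' x) x) (hg : ContinuousOn g (Icc a b))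
    (hle : ∀ x ∈ Icc a b, f' x ≤ -g x) : ∫ x in a..b, g x ≤ f a - f b := by
  have := intervalIntegral.integral_le_sub_of_hasDeriv_right_of_le (g := fun x => -f x)
    (g' := fun x => -f' x) hab (fun x hx => (hf x hx).continuousAt.continuousWithinAt.neg)
    (fun x hx => (hf x (Ioo_subset_Icc_self hx)).neg.hasDerivWithinAt) hg.integrableOn_Icc
    fun x hx => le_neg_of_le_neg (hle x (Ioo_subset_Icc_self hx))
  linarith

theorem integral_eq_of_hasDerivAt_sub {f g G : ℝ → ℝ} (hG : ∀ x, HasDerivAt G (f x - g x) x)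
    (hf : Integrable f) (hg : Integrable g) (hGint : Integrable G) : ∫ x, f x = ∫ x, g x := by
  rw [← sub_eq_zero, ← integral_sub hf hg]
  exact integral_eq_zero_of_hasDerivAt_of_integrable hG (hf.sub hg) hGint

variable {E : Type*} [NormedAddCommGroup E] [NormedSpace ℝ E]

theorem hasDerivAt_integral_of_compact_support {X : Type*} [TopologicalSpace X] [T2Space X]
    [MeasurableSpace X] [OpensMeasurableSpace X] [SecondCountableTopologyEither X E]
    {μ : Measure X} [IsFiniteMeasureOnCompacts μ] {K : Set X} (hK : IsCompact K)
    {F F' : ℝ → X → E} (hF : Continuous (uncurry F)) (hF' : Continuous (uncurry F'))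
    (hderiv : ∀ t x, HasDerivAt (fun τ => F τ x) (F' t x) t) (hzero : ∀ t, ∀ x ∉ K, F t x = 0)
    (t : ℝ) : HasDerivAt (fun τ => ∫ x, F τ x ∂μ) (∫ x, F' t x ∂μ) t := by
  have hzero' : ∀ s, ∀ x ∉ K, F' s x = 0 := fun s x hx =>
    (hderiv s x).unique (by simpa only [hzero _ x hx] using hasDerivAt_const s (0 : E))
  obtain ⟨C, hC⟩ := ((isCompact_Icc (a := t - 1) (b := t + 1)).prod hK).exists_bound_of_continuousOn
    hF'.continuousOn
  have bound : ∀ x, ∀ s ∈ Icc (t - 1) (t + 1), ‖F' s x‖ ≤ K.indicator (fun _ => C) x := by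
    intro x s hs
    by_cases hx : x ∈ K
    · simpa only [indicator_of_mem hx, uncurry_apply_pair] using hC (s, x) ⟨hs, hx⟩
    · simp only [indicator_of_notMem hx, hzero' s x hx, norm_zero, le_refl]
  have bound_integrable : Integrable (K.indicator fun _ => C) μ :=
    (integrable_indicator_iff hK.measurableSet).mpr (integrableOn_const hK.measure_lt_top.ne)
  have hFt : ∀ s, Continuous (F s) := fun s => hF.uncurry_left s
  refine (hasDerivAt_integral_of_dominated_loc_of_deriv_le
    (Icc_mem_nhds (by linarith) (by linarith)) (.of_forall fun s => (hFt s).aestronglyMeasurable)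
    ((hFt t).integrable_of_hasCompactSupport (.intro hK (hzero t)))
    (hF'.uncurry_left t).aestronglyMeasurable (.of_forall bound) bound_integrable
    (.of_forall fun x s _ => hderiv s x)).2

variable {F : ℝ → ℝ → E} {m n : WithTop ℕ∞}

theorem contDiff_uncurry_deriv_snd (hF : ContDiff ℝ n (uncurry F)) (hmn : m + 1 ≤ n) :
    ContDiff ℝ m (uncurry fun t => deriv (F t)) := by
  have : ContDiff ℝ n (uncurry fun p : ℝ × ℝ => F p.1) :=
    hF.comp (contDiff_fst.fst.prodMk contDiff_snd)
  exact (this.fderiv contDiff_snd hmn).clm_apply contDiff_const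

theorem contDiff_uncurry_deriv_fst (hF : ContDiff ℝ n (uncurry F)) (hmn : m + 1 ≤ n) :
    ContDiff ℝ m (uncurry fun t x => deriv (fun τ => F τ x) t) :=
  (contDiff_uncurry_deriv_snd (F := fun x t => F t x)
    (hF.comp (contDiff_snd.prodMk contDiff_fst)) hmn).comp (contDiff_snd.prodMk contDiff_fst)

theorem hasDerivAt_snd_of_contDiff_uncurry (hF : ContDiff ℝ n (uncurry F)) (hn : n ≠ 0) (t x : ℝ) :
    HasDerivAt (F t) (fderiv ℝ (uncurry F) (t, x) (0, 1)) x :=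
  ((hF.differentiable hn (t, x)).hasFDerivAt).comp_hasDerivAt x
    ((hasDerivAt_const x t).prodMk (hasDerivAt_id x))

theorem hasDerivAt_fst_of_contDiff_uncurry (hF : ContDiff ℝ n (uncurry F)) (hn : n ≠ 0) (t x : ℝ) :
    HasDerivAt (fun τ => F τ x) (fderiv ℝ (uncurry F) (t, x) (1, 0)) t :=
  ((hF.differentiable hn (t, x)).hasFDerivAt).comp_hasDerivAt (f := fun τ => (τ, x)) t
    ((hasDerivAt_id t).prodMk (hasDerivAt_const t x))

theorem deriv_fst_deriv_snd_comm (hF : ContDiff ℝ 2 (uncurry F)) (t x : ℝ) :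
    deriv (fun τ => deriv (F τ) x) t = deriv (fun y => deriv (fun τ => F τ y) t) x := by
  have hF' : ContDiff ℝ 1 (fderiv ℝ (uncurry F)) := hF.fderiv_right (by norm_num)
  have hxt : HasDerivAt (fun τ => deriv (F τ) x)
      (fderiv ℝ (fderiv ℝ (uncurry F)) (t, x) (1, 0) (0, 1)) t := by
    simp only [fun τ => (hasDerivAt_snd_of_contDiff_uncurry hF two_ne_zero τ x).deriv]
    simpa using (hasDerivAt_fst_of_contDiff_uncurry
      (F := curry (fderiv ℝ (uncurry F))) hF' one_ne_zero t x).clm_apply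
      (hasDerivAt_const t ((0 : ℝ), (1 : ℝ)))
  have htx : HasDerivAt (fun y => deriv (fun τ => F τ y) t)
      (fderiv ℝ (fderiv ℝ (uncurry F)) (t, x) (0, 1) (1, 0)) x := by
    simp only [fun y => (hasDerivAt_fst_of_contDiff_uncurry hF two_ne_zero t y).deriv]
    simpa using (hasDerivAt_snd_of_contDiff_uncurry
      (F := curry (fderiv ℝ (uncurry F))) hF' one_ne_zero t x).clm_apply
      (hasDerivAt_const x ((1 : ℝ), (0 : ℝ)))
  rw [hxt.deriv, htx.deriv]
  exact hF.contDiffAt.isSymmSndFDerivAt (by simp) (1, 0) (0, 1)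

end Calculus

section SpatialIdentities

variable {v : ℝ → ℝ}

theorem hasCompactSupport_of_jet_eq_zero {G : ℝ → ℝ} (hc : HasCompactSupport v)
    (hG : ∀ x, v x = 0 → deriv v x = 0 → deriv (deriv v) x = 0 → G x = 0) :
    HasCompactSupport G := by
  refine .intro hc fun x hx => hG x (image_eq_zero_of_notMem_tsupport hx) ?_ ?_
  · exact image_eq_zero_of_notMem_tsupport fun h => hx (tsupport_deriv_subset h)
  · exact image_eq_zero_of_notMem_tsupport fun h =>
      hx (tsupport_deriv_subset (tsupport_deriv_subset h))

theorem integrable_of_jet_eq_zero {G : ℝ → ℝ} (hc : HasCompactSupport v) (hG : Continuous G)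
    (hzero : ∀ x, v x = 0 → deriv v x = 0 → deriv (deriv v) x = 0 → G x = 0) : Integrable G :=
  hG.integrable_of_hasCompactSupport (hasCompactSupport_of_jet_eq_zero hc hzero)

theorem mul_sq_le_integral_sq_add_mul_deriv_sq (hv : ContDiff ℝ 1 v) (hc : HasCompactSupport v)
    (c x : ℝ) : c * v x ^ 2 ≤ (∫ y, v y ^ 2) + c ^ 2 * ∫ y, deriv v y ^ 2 := by
  have : Continuous (deriv v) := hv.continuous_deriv le_rfl
  have hcv : Continuous v := hv.continuous
  have int_sq : Integrable fun y => v y ^ 2 :=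
    integrable_of_jet_eq_zero hc (by fun_prop) fun y h₀ _ _ => by simp [h₀]
  have int_deriv_sq : Integrable fun y => deriv v y ^ 2 :=
    integrable_of_jet_eq_zero hc (by fun_prop) fun y _ h₁ _ => by simp [h₁]
  have deriv_sq : ∀ y, deriv (fun z => c * v z ^ 2) y = 2 * v y * (c * deriv v y) := fun y => by
    have := ((hv.differentiable one_ne_zero y).hasDerivAt.fun_pow 2).const_mul c
    rw [this.deriv]
    push_cast
    ring
  have int_cross : Integrable fun y => 2 * v y * (c * deriv v y) :=
    integrable_of_jet_eq_zero hc (by fun_prop) fun y h₀ _ _ => by simp [h₀]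
  calc c * v x ^ 2 = ∫ y in Iic x, 2 * v y * (c * deriv v y) := by
        rw [← HasCompactSupport.integral_Iic_deriv_eq (f := fun z => c * v z ^ 2) (by fun_prop)
          (hc.comp_left (g := fun z => c * z ^ 2) (by simp))]
        simp only [deriv_sq]
    _ ≤ ∫ y in Iic x, (v y ^ 2 + c ^ 2 * deriv v y ^ 2) := by
        refine setIntegral_mono int_cross.integrableOn
          (int_sq.add (int_deriv_sq.const_mul _)).integrableOn fun y => ?_
        simpa only [mul_pow] using two_mul_le_add_sq (v y) (c * deriv v y)
    _ ≤ ∫ y, (v y ^ 2 + c ^ 2 * deriv v y ^ 2) :=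
        setIntegral_le_integral (int_sq.add (int_deriv_sq.const_mul _))
          (.of_forall fun y => by positivity)
    _ = (∫ y, v y ^ 2) + c ^ 2 * ∫ y, deriv v y ^ 2 := by
        rw [integral_add int_sq (int_deriv_sq.const_mul _), integral_const_mul]

/-- The functional `a ∫ vⁿ + b ∫ (v')²`: the conserved energy of the dispersive part is
`energy 2 1 β`, and `energy 4 (l ^ 2) (ε ^ 2)` is the higher-order functional. -/
noncomputable def energy (n : ℕ) (a b : ℝ) (v : ℝ → ℝ) : ℝ :=
  a * (∫ x, v x ^ n) + b * ∫ x, deriv v x ^ 2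

/-- The right-hand side `N(v)` of the Kudryashov–Sinelshchikov equation `∂ₜu = N(u)` for
`B = 2A/3`, `C = -A/3`, `D = 0`. -/
noncomputable def ksOperator (A ε β : ℝ) (v : ℝ → ℝ) (x : ℝ) : ℝ :=
  -A * v x * deriv v x - β * deriv (deriv (deriv v)) x
    + 2 * A / 3 * β * deriv (fun y => v y * deriv (deriv v) y) x
    - A / 3 * β * deriv v x * deriv (deriv v) x + ε * deriv (deriv v) x

/-- The `L¹` norm of `v v' v''`. -/
noncomputable def tripleProductNorm (v : ℝ → ℝ) : ℝ :=
  ∫ x, |v x| * |deriv v x| * |deriv (deriv v) x|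

/-- With `y`, `p`, `z` standing for `u`, `∂ₓu`, `∂ₓ²u`, the integrand of the time derivative of
`energy 4 (l ^ 2) (ε ^ 2)` along the equation, after integrating by parts. -/
noncomputable def quarticEnergyRate (A ε β l y p z : ℝ) : ℝ :=
  12 * l ^ 2 * β * y ^ 2 * p * z - 28 / 3 * A * l ^ 2 * β * y ^ 3 * p * z
    - 12 * l ^ 2 * ε * y ^ 2 * p ^ 2 + 2 * A * ε ^ 2 * y * p * z - 2 * ε ^ 3 * z ^ 2

theorem energy_nonneg {n : ℕ} {a b : ℝ} (hn : Even n) (ha : 0 ≤ a) (hb : 0 ≤ b) :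
    0 ≤ energy n a b v :=
  add_nonneg (mul_nonneg ha (integral_nonneg fun x => hn.pow_nonneg (v x)))
    (mul_nonneg hb (integral_nonneg fun x => sq_nonneg (deriv v x)))

theorem tripleProductNorm_nonneg : 0 ≤ tripleProductNorm v :=
  integral_nonneg fun x => by positivity

theorem sqrt_mul_sq_le_energy {β : ℝ} (hβ : 0 ≤ β) (hv : ContDiff ℝ 1 v)
    (hc : HasCompactSupport v) (x : ℝ) : √β * v x ^ 2 ≤ energy 2 1 β v := by
  simpa only [energy, one_mul, Real.sq_sqrt hβ] using
    mul_sq_le_integral_sq_add_mul_deriv_sq hv hc √β x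

theorem mul_sq_le_energy_add_energy {β l : ℝ} (hβ : 0 ≤ β) (hv : ContDiff ℝ 1 v)
    (hc : HasCompactSupport v) (ε x : ℝ) :
    ε * v x ^ 2 ≤ energy 2 1 β v + energy 4 (l ^ 2) (ε ^ 2) v := by
  have h₁ : 0 ≤ β * ∫ x, deriv v x ^ 2 := mul_nonneg hβ (integral_nonneg fun x => sq_nonneg _)
  have h₂ : 0 ≤ l ^ 2 * ∫ x, v x ^ 4 :=
    mul_nonneg (sq_nonneg l) (integral_nonneg fun x => by positivity)
  have := mul_sq_le_integral_sq_add_mul_deriv_sq hv hc ε x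
  simp only [energy]
  linarith

variable {A ε β : ℝ}

theorem ksOperator_eq (hv : ContDiff ℝ 3 v) (x : ℝ) :
    ksOperator A ε β v x = -A * v x * deriv v x - β * deriv (deriv (deriv v)) x
      + A / 3 * β * deriv v x * deriv (deriv v) x
      + 2 * A / 3 * β * v x * deriv (deriv (deriv v)) x + ε * deriv (deriv v) x := by
  have hv₂ : ContDiff ℝ 1 (deriv (deriv v)) := (hv.deriv' (n := 2)).deriv' (n := 1)
  have product_rule := ((hv.differentiable three_ne_zero x).hasDerivAt.fun_mul
    (hv₂.differentiable one_ne_zero x).hasDerivAt).deriv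
  rw [ksOperator, product_rule]
  ring

theorem continuous_ksOperator (hv : ContDiff ℝ 3 v) : Continuous (ksOperator A ε β v) := by
  have hv₁ : ContDiff ℝ 2 (deriv v) := hv.deriv'
  have hv₂ : ContDiff ℝ 1 (deriv (deriv v)) := hv₁.deriv'
  have : Continuous (deriv (deriv (deriv v))) := hv₂.continuous_deriv le_rfl
  rw [funext (ksOperator_eq hv)]
  fun_prop

theorem integral_energy_gradient_mul_ksOperator (hv : ContDiff ℝ 3 v) (hc : HasCompactSupport v) :
    ∫ x, (2 * v x - 2 * β * deriv (deriv v) x) * ksOperator A ε β v x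
      = -∫ x, (2 * ε * deriv v x ^ 2 + 2 * β * ε * deriv (deriv v) x ^ 2) := by
  have hv₁ : ContDiff ℝ 2 (deriv v) := hv.deriv'
  have hv₂ : ContDiff ℝ 1 (deriv (deriv v)) := hv₁.deriv'
  have hN := continuous_ksOperator (A := A) (ε := ε) (β := β) hv
  rw [← integral_neg]
  refine integral_eq_of_hasDerivAt_sub (G := fun x => -(2 * A / 3) * v x ^ 3
    - 2 * β * (v x * deriv (deriv v) x) + β * deriv v x ^ 2
    + 4 * A / 3 * β * (v x ^ 2 * deriv (deriv v) x) + 2 * ε * (v x * deriv v x)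
    + β ^ 2 * deriv (deriv v) x ^ 2 - 2 * A / 3 * β ^ 2 * (v x * deriv (deriv v) x ^ 2))
    (fun x => ?_) ?_ ?_ ?_
  · have D₀ := (hv.differentiable three_ne_zero x).hasDerivAt
    have D₁ := (hv₁.differentiable two_ne_zero x).hasDerivAt
    have D₂ := (hv₂.differentiable one_ne_zero x).hasDerivAt
    refine ((((((((D₀.fun_pow 3).const_mul (-(2 * A / 3))).fun_sub
      ((D₀.fun_mul D₂).const_mul (2 * β))).fun_add ((D₁.fun_pow 2).const_mul β)).fun_add
      (((D₀.fun_pow 2).fun_mul D₂).const_mul (4 * A / 3 * β))).fun_add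
      ((D₀.fun_mul D₁).const_mul (2 * ε))).fun_add ((D₂.fun_pow 2).const_mul (β ^ 2))).fun_sub
      ((D₀.fun_mul (D₂.fun_pow 2)).const_mul (2 * A / 3 * β ^ 2))).congr_deriv ?_
    rw [ksOperator_eq hv]
    push_cast
    ring
  all_goals
    exact integrable_of_jet_eq_zero hc (by fun_prop) fun x h₀ h₁ h₂ => by simp [h₀, h₁, h₂]

theorem integral_quartic_energy_gradient_mul_ksOperator (l : ℝ) (hv : ContDiff ℝ 3 v)
    (hc : HasCompactSupport v) :
    ∫ x, (4 * l ^ 2 * v x ^ 3 - 2 * ε ^ 2 * deriv (deriv v) x) * ksOperator A ε β v x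
      = ∫ x, quarticEnergyRate A ε β l (v x) (deriv v x) (deriv (deriv v) x) := by
  have hv₁ : ContDiff ℝ 2 (deriv v) := hv.deriv'
  have hv₂ : ContDiff ℝ 1 (deriv (deriv v)) := hv₁.deriv'
  have hN := continuous_ksOperator (A := A) (ε := ε) (β := β) hv
  simp only [quarticEnergyRate]
  refine integral_eq_of_hasDerivAt_sub (G := fun x => -(4 * A * l ^ 2 / 5) * v x ^ 5
    - 4 * l ^ 2 * β * (v x ^ 3 * deriv (deriv v) x)
    + 8 * A * l ^ 2 / 3 * β * (v x ^ 4 * deriv (deriv v) x)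
    + 4 * l ^ 2 * ε * (v x ^ 3 * deriv v x) + ε ^ 2 * β * deriv (deriv v) x ^ 2
    - 2 * A / 3 * ε ^ 2 * β * (v x * deriv (deriv v) x ^ 2)) (fun x => ?_) ?_ ?_ ?_
  · have D₀ := (hv.differentiable three_ne_zero x).hasDerivAt
    have D₁ := (hv₁.differentiable two_ne_zero x).hasDerivAt
    have D₂ := (hv₂.differentiable one_ne_zero x).hasDerivAt
    refine (((((((D₀.fun_pow 5).const_mul (-(4 * A * l ^ 2 / 5))).fun_sub
      (((D₀.fun_pow 3).fun_mul D₂).const_mul (4 * l ^ 2 * β))).fun_add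
      (((D₀.fun_pow 4).fun_mul D₂).const_mul (8 * A * l ^ 2 / 3 * β))).fun_add
      (((D₀.fun_pow 3).fun_mul D₁).const_mul (4 * l ^ 2 * ε))).fun_add
      ((D₂.fun_pow 2).const_mul (ε ^ 2 * β))).fun_sub
      ((D₀.fun_mul (D₂.fun_pow 2)).const_mul (2 * A / 3 * ε ^ 2 * β))).congr_deriv ?_
    rw [ksOperator_eq hv]
    push_cast
    ring
  all_goals
    exact integrable_of_jet_eq_zero hc (by fun_prop) fun x h₀ h₁ h₂ => by simp [h₀, h₁, h₂]

theorem abs_dispersive_coeff_le {l y : ℝ} (hA : |A| ≤ l) (hβ : 0 ≤ β) :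
    |12 * l ^ 2 * β * y - 28 / 3 * A * l ^ 2 * β * y ^ 2|
      ≤ l * (β * (6 + 16 * (l * y) ^ 2)) := by
  have hl : 0 ≤ l := (abs_nonneg A).trans hA
  have young : 12 * (l * |y|) + 28 / 3 * (l * |y|) ^ 2 ≤ 6 + 16 * (l * |y|) ^ 2 := by
    nlinarith [sq_nonneg (l * |y| - 1)]
  calc |12 * l ^ 2 * β * y - 28 / 3 * A * l ^ 2 * β * y ^ 2|
      ≤ |12 * l ^ 2 * β * y| + |28 / 3 * A * l ^ 2 * β * y ^ 2| := abs_sub _ _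
    _ = l * β * (12 * (l * |y|)) + 28 / 3 * |A| * l ^ 2 * β * |y| ^ 2 := by
      simp only [abs_mul, abs_pow, abs_of_nonneg hβ, abs_of_nonneg hl, Nat.abs_ofNat, abs_div]
      ring
    _ ≤ l * β * (12 * (l * |y|)) + 28 / 3 * l * l ^ 2 * β * |y| ^ 2 := by gcongr
    _ = l * β * (12 * (l * |y|) + 28 / 3 * (l * |y|) ^ 2) := by ring
    _ ≤ l * β * (6 + 16 * (l * |y|) ^ 2) := mul_le_mul_of_nonneg_left young (by positivity)
    _ = l * (β * (6 + 16 * (l * y) ^ 2)) := by rw [mul_pow, sq_abs]; ring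

theorem quarticEnergyRate_le {l y : ℝ} (hA : |A| ≤ l) (hε : 0 ≤ ε) (hβ : 0 ≤ β)
    (hy : β * (6 + 16 * (l * y) ^ 2) ≤ 5 * ε ^ 2) (p z : ℝ) :
    quarticEnergyRate A ε β l y p z ≤ -(l * ε ^ 2 * (|y| * |p| * |z|)) := by
  have hl : 0 ≤ l := (abs_nonneg A).trans hA
  set P := |y| * |p| * |z|
  have : 0 ≤ P := by positivity
  have abs_eq_P : |y * p * z| = P := by rw [abs_mul, abs_mul]
  have dispersive : (12 * l ^ 2 * β * y - 28 / 3 * A * l ^ 2 * β * y ^ 2) * (y * p * z)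
      ≤ l * (5 * ε ^ 2) * P := by
    refine (le_abs_self _).trans ?_
    rw [abs_mul, abs_eq_P]
    gcongr
    exact (abs_dispersive_coeff_le hA hβ).trans (by gcongr)
  have transport : 2 * A * ε ^ 2 * (y * p * z) ≤ 2 * l * ε ^ 2 * P := by
    refine (le_abs_self _).trans ?_
    rw [abs_mul, abs_eq_P, abs_mul, abs_mul, abs_two, abs_of_nonneg (sq_nonneg ε)]
    gcongr
  have dissipation : 8 * l * ε ^ 2 * P ≤ 12 * l ^ 2 * ε * (y * p) ^ 2 + 2 * ε ^ 3 * z ^ 2 := by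
    have square : 0 ≤ 2 * ε * (2 * l * (|y| * |p|) - ε * |z|) ^ 2 := by positivity
    have surplus : 0 ≤ 4 * l ^ 2 * ε * (|y| * |p|) ^ 2 := by positivity
    rw [← sq_abs (y * p), ← sq_abs z, abs_mul]
    linarith
  rw [quarticEnergyRate]
  linarith

theorem mul_tripleProductNorm_le_mul_dissipation {m : ℝ} (hε : 0 ≤ ε) (hβ : 0 ≤ β)
    (hv : ContDiff ℝ 2 v) (hc : HasCompactSupport v) (hm : ∀ x, √β * |v x| ≤ m) :
    4 * ε * (β * tripleProductNorm v)
      ≤ m * ∫ x, (2 * ε * deriv v x ^ 2 + 2 * β * ε * deriv (deriv v) x ^ 2) := by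
  have hv₁ : ContDiff ℝ 1 (deriv v) := hv.deriv'
  have := hv₁.continuous_deriv le_rfl
  have hcv := hv.continuous
  have hcv₁ := hv₁.continuous
  have pointwise : ∀ x, 4 * ε * (β * (|v x| * |deriv v x| * |deriv (deriv v) x|))
      ≤ m * (2 * ε * deriv v x ^ 2 + 2 * β * ε * deriv (deriv v) x ^ 2) := fun x => by
    have young : 4 * ε * √β * (|deriv v x| * |deriv (deriv v) x|)
        ≤ 2 * ε * deriv v x ^ 2 + 2 * β * ε * deriv (deriv v) x ^ 2 := by
      have square : 0 ≤ 2 * ε * (|deriv v x| - √β * |deriv (deriv v) x|) ^ 2 := by positivity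
      rw [sub_sq, mul_pow, Real.sq_sqrt hβ, sq_abs, sq_abs] at square
      linarith
    calc 4 * ε * (β * (|v x| * |deriv v x| * |deriv (deriv v) x|))
        = √β * |v x| * (4 * ε * √β * (|deriv v x| * |deriv (deriv v) x|)) := by
          nth_rewrite 1 [← Real.mul_self_sqrt hβ]
          ring
      _ ≤ m * (2 * ε * deriv v x ^ 2 + 2 * β * ε * deriv (deriv v) x ^ 2) :=
          mul_le_mul (hm x) young (by positivity) ((by positivity : 0 ≤ √β * |v x|).trans (hm x))
  rw [tripleProductNorm, ← integral_const_mul, ← integral_const_mul, ← integral_const_mul]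
  refine integral_mono ?_ ?_ pointwise
  all_goals
    exact integrable_of_jet_eq_zero hc (by fun_prop) fun x h₀ h₁ h₂ => by simp [h₀, h₁, h₂]

theorem integral_quarticEnergyRate_le {l : ℝ} (hA : |A| ≤ l) (hε : 0 ≤ ε) (hβ : 0 ≤ β)
    (hv : ContDiff ℝ 2 v) (hc : HasCompactSupport v)
    (hy : ∀ x, β * (6 + 16 * (l * v x) ^ 2) ≤ 5 * ε ^ 2) :
    ∫ x, quarticEnergyRate A ε β l (v x) (deriv v x) (deriv (deriv v) x)
      ≤ -(l * ε ^ 2 * tripleProductNorm v) := by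
  have hv₁ : ContDiff ℝ 1 (deriv v) := hv.deriv'
  have := hv₁.continuous_deriv le_rfl
  have hcv := hv.continuous
  have hcv₁ := hv₁.continuous
  rw [tripleProductNorm, ← integral_const_mul, ← integral_neg]
  refine integral_mono ?_ ?_ fun x => quarticEnergyRate_le hA hε hβ (hy x) _ _
  · simp only [quarticEnergyRate]
    exact integrable_of_jet_eq_zero hc (by fun_prop) fun x h₀ h₁ h₂ => by simp [h₀, h₁, h₂]
  · exact integrable_of_jet_eq_zero hc (by fun_prop) fun x h₀ h₁ h₂ => by simp [h₀, h₁, h₂]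

theorem energy_two_le_of_size_le {C₀ : ℝ}
    (hv : (∫ x, v x ^ 2) + (∫ x, v x ^ 4) + (β + ε ^ 2) * (∫ x, deriv v x ^ 2) ≤ C₀) :
    energy 2 1 β v ≤ C₀ := by
  have quartic_nonneg : 0 ≤ energy 4 1 (ε ^ 2) v :=
    energy_nonneg (by decide) zero_le_one (sq_nonneg ε)
  simp only [energy] at quartic_nonneg ⊢
  linarith

theorem energy_four_le_of_size_le {C₀ l : ℝ} (hβ : 0 ≤ β) (hl : 1 ≤ l)
    (hv : (∫ x, v x ^ 2) + (∫ x, v x ^ 4) + (β + ε ^ 2) * (∫ x, deriv v x ^ 2) ≤ C₀) :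
    energy 4 (l ^ 2) (ε ^ 2) v ≤ l ^ 2 * C₀ := by
  have basic_nonneg : 0 ≤ energy 2 1 β v := energy_nonneg even_two zero_le_one hβ
  have dissipation_nonneg : 0 ≤ ε ^ 2 * ∫ x, deriv v x ^ 2 :=
    mul_nonneg (sq_nonneg ε) (integral_nonneg fun x => sq_nonneg _)
  calc energy 4 (l ^ 2) (ε ^ 2) v
      ≤ l ^ 2 * (∫ x, v x ^ 4) + l ^ 2 * (ε ^ 2 * ∫ x, deriv v x ^ 2) :=
        add_le_add le_rfl (le_mul_of_one_le_left dissipation_nonneg (one_le_pow₀ hl))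
    _ = l ^ 2 * ((∫ x, v x ^ 4) + ε ^ 2 * ∫ x, deriv v x ^ 2) := by ring
    _ ≤ l ^ 2 * C₀ := by
        gcongr
        simp only [energy] at basic_nonneg
        linarith

end SpatialIdentities

section Evolution

variable {K : Set ℝ} {u : ℝ → ℝ → ℝ}

theorem hasDerivAt_integral_pow {n : ℕ} (hn : n ≠ 0) (hK : IsCompact K)
    (hu : ContDiff ℝ 1 (uncurry u)) (hzero : ∀ t, ∀ x ∉ K, u t x = 0) (t : ℝ) :
    HasDerivAt (fun τ => ∫ x, u τ x ^ n)
      (∫ x, n * u t x ^ (n - 1) * deriv (fun τ => u τ x) t) t := by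
  have hut : Continuous (uncurry fun t x => deriv (fun τ => u τ x) t) :=
    (contDiff_uncurry_deriv_fst hu (m := 0) (by simp)).continuous
  refine hasDerivAt_integral_of_compact_support (F := fun τ x => u τ x ^ n)
    (F' := fun t x => n * u t x ^ (n - 1) * deriv (fun τ => u τ x) t)
    hK (hu.continuous.pow n) ((continuous_const.mul (hu.continuous.pow (n - 1))).mul hut)
    (fun s x => ?_) (fun s x hx => by simp [hzero s x hx, hn]) t
  have hasDerivAt_u := hasDerivAt_fst_of_contDiff_uncurry hu one_ne_zero s x
  exact hasDerivAt_u.differentiableAt.hasDerivAt.fun_pow n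

theorem hasDerivAt_integral_deriv_sq (hK : IsCompact K) (hu : ContDiff ℝ 2 (uncurry u))
    (hzero : ∀ t, ∀ x ∉ K, u t x = 0) (t : ℝ) :
    HasDerivAt (fun τ => ∫ x, deriv (u τ) x ^ 2)
      (-2 * ∫ x, deriv (deriv (u t)) x * deriv (fun τ => u τ x) t) t := by
  have hux : ContDiff ℝ 1 (uncurry fun t => deriv (u t)) :=
    contDiff_uncurry_deriv_snd hu (by norm_num)
  have hux_t : ContDiff ℝ 1 (deriv (u t)) := hux.comp (contDiff_const.prodMk contDiff_id)
  have hut : ContDiff ℝ 1 fun x => deriv (fun τ => u τ x) t :=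
    (contDiff_uncurry_deriv_fst hu (by norm_num)).comp (contDiff_const.prodMk contDiff_id)
  have hux_zero : ∀ s, ∀ x ∉ K, deriv (u s) x = 0 :=
    fun s => deriv_eq_zero_of_notMem hK.isClosed (hzero s)
  have hc : HasCompactSupport (deriv (u t)) := .intro hK (hux_zero t)
  have by_parts : (∫ x, deriv (u t) x * deriv (fun y => deriv (fun τ => u τ y) t) x)
      = -∫ x, deriv (deriv (u t)) x * deriv (fun τ => u τ x) t := by
    have huxx := hux_t.continuous_deriv le_rfl
    have hutx := hut.continuous_deriv le_rfl
    refine integral_mul_deriv_eq_deriv_mul_of_integrable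
      (fun x _ => (hux_t.differentiable one_ne_zero x).hasDerivAt)
      (fun x _ => (hut.differentiable one_ne_zero x).hasDerivAt) ?_ ?_ ?_
    · exact (hux_t.continuous.mul hutx).integrable_of_hasCompactSupport hc.mul_right
    · exact (huxx.mul hut.continuous).integrable_of_hasCompactSupport hc.deriv.mul_right
    · exact (hux_t.continuous.mul hut.continuous).integrable_of_hasCompactSupport hc.mul_right
  convert hasDerivAt_integral_pow two_ne_zero hK hux hux_zero t using 1
  simp only [deriv_fst_deriv_snd_comm hu, Nat.cast_ofNat, Nat.add_one_sub_one, pow_one, mul_assoc,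
    integral_const_mul, by_parts]
  ring

theorem hasDerivAt_energy {n : ℕ} (hn : n ≠ 0) (a b : ℝ) (hK : IsCompact K)
    (hu : ContDiff ℝ 2 (uncurry u)) (hzero : ∀ t, ∀ x ∉ K, u t x = 0) (t : ℝ) :
    HasDerivAt (fun τ => energy n a b (u τ))
      (∫ x, (n * a * u t x ^ (n - 1) - 2 * b * deriv (deriv (u t)) x)
        * deriv (fun τ => u τ x) t) t := by
  have hu₁ : ContDiff ℝ 1 (uncurry u) := hu.of_le one_le_two
  have hut : Continuous fun x => deriv (fun τ => u τ x) t :=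
    ((contDiff_uncurry_deriv_fst hu (m := 1) (by norm_num)).continuous).uncurry_left t
  have hu_t : ContDiff ℝ 2 (u t) := hu.comp (contDiff_const.prodMk contDiff_id)
  have huxx : Continuous (deriv (deriv (u t))) := (hu_t.deriv' (n := 1)).continuous_deriv le_rfl
  have hut_zero : ∀ x ∉ K, deriv (fun τ => u τ x) t = 0 := fun x hx => by
    simp only [hzero _ x hx, deriv_const]
  have integrable_mul : ∀ {g : ℝ → ℝ}, Continuous g →
      Integrable fun x => g x * deriv (fun τ => u τ x) t := fun hg =>
    (hg.mul hut).integrable_of_hasCompactSupport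
      (.intro hK fun x hx => by simp only [Pi.mul_apply, hut_zero x hx, mul_zero])
  refine (((hasDerivAt_integral_pow hn hK hu₁ hzero t).const_mul a).fun_add
    ((hasDerivAt_integral_deriv_sq hK hu hzero t).const_mul b)).congr_deriv ?_
  have hcu := hu_t.continuous
  have int_pow : Integrable fun x => n * u t x ^ (n - 1) * deriv (fun τ => u τ x) t :=
    integrable_mul (by fun_prop)
  rw [← integral_const_mul, ← mul_assoc, ← integral_const_mul,
    ← integral_add (int_pow.const_mul a) ((integrable_mul huxx).const_mul _)]
  congr 1 with x
  ring

/-- Classical solutions of `∂ₜu = N(u)` on `[0, ∞) × ℝ` whose time slices all vanish off the fixed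
set `K`. Regularity and vanishing are imposed for all real times, so that the two-sided time
derivative is meaningful at `t = 0`. -/
structure IsClassicalSolution (A ε β : ℝ) (K : Set ℝ) (u : ℝ → ℝ → ℝ) : Prop where
  contDiff : ContDiff ℝ 3 (uncurry u)
  eq_zero : ∀ t, ∀ x ∉ K, u t x = 0
  deriv_eq : ∀ t, 0 ≤ t → ∀ x, deriv (fun τ => u τ x) t = ksOperator A ε β (u t) x

namespace IsClassicalSolution

variable {A ε β l κ C₀ T : ℝ}

theorem contDiff_slice (hu : IsClassicalSolution A ε β K u) (t : ℝ) : ContDiff ℝ 3 (u t) :=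
  hu.contDiff.comp (contDiff_const.prodMk contDiff_id)

theorem hasCompactSupport_slice (hu : IsClassicalSolution A ε β K u) (hK : IsCompact K) (t : ℝ) :
    HasCompactSupport (u t) :=
  .intro hK (hu.eq_zero t)

theorem continuous_tripleProductNorm (hu : IsClassicalSolution A ε β K u) (hK : IsCompact K) :
    Continuous fun t => tripleProductNorm (u t) := by
  have hux : ContDiff ℝ 2 (uncurry fun t => deriv (u t)) :=
    contDiff_uncurry_deriv_snd hu.contDiff (by norm_num)
  have huxx : ContDiff ℝ 1 (uncurry fun t => deriv (deriv (u t))) :=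
    contDiff_uncurry_deriv_snd hux (by norm_num)
  rw [← continuousOn_univ]
  refine continuousOn_integral_of_compact_support hK
    ((hu.contDiff.continuous.abs.mul hux.continuous.abs).mul huxx.continuous.abs).continuousOn
    fun t x _ hx => by simp [hu.eq_zero t x hx]

theorem hasDerivAt_energy_two (hu : IsClassicalSolution A ε β K u) (hK : IsCompact K) {t : ℝ}
    (ht : 0 ≤ t) : HasDerivAt (fun τ => energy 2 1 β (u τ))
      (-∫ x, (2 * ε * deriv (u t) x ^ 2 + 2 * β * ε * deriv (deriv (u t)) x ^ 2)) t := by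
  rw [← integral_energy_gradient_mul_ksOperator (A := A) (hu.contDiff_slice t)
    (hu.hasCompactSupport_slice hK t)]
  simpa only [hu.deriv_eq t ht, Nat.cast_ofNat, mul_one, Nat.add_one_sub_one, pow_one] using
    hasDerivAt_energy two_ne_zero 1 β hK (hu.contDiff.of_le (by norm_num)) hu.eq_zero t

theorem hasDerivAt_energy_four (hu : IsClassicalSolution A ε β K u) (hK : IsCompact K) (l : ℝ)
    {t : ℝ} (ht : 0 ≤ t) : HasDerivAt (fun τ => energy 4 (l ^ 2) (ε ^ 2) (u τ))
      (∫ x, quarticEnergyRate A ε β l (u t x) (deriv (u t) x) (deriv (deriv (u t)) x)) t := by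
  rw [← integral_quartic_energy_gradient_mul_ksOperator l (hu.contDiff_slice t)
    (hu.hasCompactSupport_slice hK t)]
  simpa only [hu.deriv_eq t ht, Nat.cast_ofNat, Nat.add_one_sub_one] using
    hasDerivAt_energy four_ne_zero (l ^ 2) (ε ^ 2) hK (hu.contDiff.of_le (by norm_num)) hu.eq_zero t

theorem energy_two_le_initial (hu : IsClassicalSolution A ε β K u) (hK : IsCompact K) (hε : 0 ≤ ε)
    (hβ : 0 ≤ β) {t : ℝ} (ht : 0 ≤ t) : energy 2 1 β (u t) ≤ energy 2 1 β (u 0) := by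
  have := integral_le_sub_of_hasDerivAt_le_neg (g := fun _ => 0) ht
    (fun s hs => hu.hasDerivAt_energy_two hK hs.1) continuousOn_const fun s _ =>
      neg_le_neg (integral_nonneg fun x => by positivity)
  simpa using this

theorem mul_integral_tripleProductNorm_le_energy_two (hu : IsClassicalSolution A ε β K u)
    (hK : IsCompact K) (hε : 0 ≤ ε) (hβ : 0 ≤ β) (hT : 0 ≤ T) :
    4 * ε * (β * ∫ s in (0 : ℝ)..T, tripleProductNorm (u s))
      ≤ energy 2 1 β (u 0) * √(energy 2 1 β (u 0) * √β) := by
  set E₀ := energy 2 1 β (u 0)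
  have sup_bound : ∀ s ∈ Icc 0 T, ∀ x, √β * |u s x| ≤ √(E₀ * √β) := fun s hs x => by
    refine Real.le_sqrt_of_sq_le ?_
    have := (sqrt_mul_sq_le_energy hβ ((hu.contDiff_slice s).of_le (by norm_num))
      (hu.hasCompactSupport_slice hK s) x).trans (hu.energy_two_le_initial hK hε hβ hs.1)
    calc (√β * |u s x|) ^ 2 = √β * u s x ^ 2 * √β := by rw [mul_pow, sq_abs]; ring
      _ ≤ E₀ * √β := by gcongr
  have bound := integral_le_sub_of_hasDerivAt_le_neg (g := fun s =>
      4 * ε * (β * tripleProductNorm (u s))) hT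
    (fun s hs => (hu.hasDerivAt_energy_two hK hs.1).const_mul √(E₀ * √β))
    (((hu.continuous_tripleProductNorm hK).const_mul β).const_mul (4 * ε)).continuousOn
    fun s hs => by
      rw [mul_neg]
      exact neg_le_neg (mul_tripleProductNorm_le_mul_dissipation hε hβ
        ((hu.contDiff_slice s).of_le (by norm_num)) (hu.hasCompactSupport_slice hK s)
        (sup_bound s hs))
  have final_nonneg : 0 ≤ √(E₀ * √β) * energy 2 1 β (u T) :=
    mul_nonneg (Real.sqrt_nonneg _) (energy_nonneg even_two zero_le_one hβ)
  simp only [intervalIntegral.integral_const_mul] at bound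
  linarith

theorem mul_integral_tripleProductNorm_le_energy_four (hu : IsClassicalSolution A ε β K u)
    (hK : IsCompact K) (hε : 0 < ε) (hβ : 0 ≤ β) (hA : |A| ≤ l) {L : ℝ}
    (hL : energy 4 (l ^ 2) (ε ^ 2) (u 0) < L)
    (hβε : β * (6 * ε + 16 * l ^ 2 * (energy 2 1 β (u 0) + L)) ≤ 5 * ε ^ 3) (hT : 0 ≤ T) :
    l * ε ^ 2 * ∫ s in (0 : ℝ)..T, tripleProductNorm (u s) ≤ energy 4 (l ^ 2) (ε ^ 2) (u 0) := by
  have hl : 0 ≤ l := (abs_nonneg A).trans hA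
  have rate_le : ∀ s, 0 ≤ s → energy 4 (l ^ 2) (ε ^ 2) (u s) ≤ L →
      ∫ x, quarticEnergyRate A ε β l (u s x) (deriv (u s) x) (deriv (deriv (u s)) x)
        ≤ -(l * ε ^ 2 * tripleProductNorm (u s)) := fun s hs hFs => by
    have hv := hu.contDiff_slice s
    have hc := hu.hasCompactSupport_slice hK s
    refine integral_quarticEnergyRate_le hA hε.le hβ (hv.of_le (by norm_num)) hc fun x => ?_
    have sup_bound : ε * u s x ^ 2 ≤ energy 2 1 β (u 0) + L :=
      (mul_sq_le_energy_add_energy hβ (hv.of_le (by norm_num)) hc ε x).trans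
        (add_le_add (hu.energy_two_le_initial hK hε.le hβ hs) hFs)
    refine le_of_mul_le_mul_left ?_ hε
    calc ε * (β * (6 + 16 * (l * u s x) ^ 2)) = β * (6 * ε + 16 * l ^ 2 * (ε * u s x ^ 2)) := by
          ring
      _ ≤ β * (6 * ε + 16 * l ^ 2 * (energy 2 1 β (u 0) + L)) := by gcongr
      _ ≤ 5 * ε ^ 3 := hβε
      _ = ε * (5 * ε ^ 2) := by ring
  have hderiv := fun s (hs : s ∈ Icc 0 T) => hu.hasDerivAt_energy_four hK l hs.1
  have energy_le : ∀ s ∈ Icc 0 T, energy 4 (l ^ 2) (ε ^ 2) (u s) ≤ energy 4 (l ^ 2) (ε ^ 2) (u 0) :=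
    fun s hs => le_of_deriv_right_nonpos_of_le hL
      (fun r hr => (hderiv r hr).continuousAt.continuousWithinAt)
      (fun r hr => (hderiv r (Ico_subset_Icc_self hr)).hasDerivWithinAt) le_rfl
      (fun r hr hFr => (rate_le r hr.1 hFr).trans (neg_nonpos.2
        (mul_nonneg (by positivity) tripleProductNorm_nonneg))) hs
  have bound := integral_le_sub_of_hasDerivAt_le_neg hT hderiv
    (((hu.continuous_tripleProductNorm hK).const_mul (l * ε ^ 2)).continuousOn)
    fun s hs => rate_le s hs.1 ((energy_le s hs).trans hL.le)
  rw [intervalIntegral.integral_const_mul] at bound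
  have final_nonneg : 0 ≤ energy 4 (l ^ 2) (ε ^ 2) (u T) :=
    energy_nonneg (by decide) (sq_nonneg l) (sq_nonneg ε)
  linarith

theorem mul_integral_tripleProductNorm_le_const (hu : IsClassicalSolution A ε β K u)
    (hK : IsCompact K) (hε : 0 < ε) (hβ : 0 ≤ β) (hβκ : β ≤ κ * ε ^ 4)
    (hE : energy 2 1 β (u 0) ≤ C₀) (hT : 0 ≤ T) :
    β * ∫ s in (0 : ℝ)..T, tripleProductNorm (u s) ≤ C₀ * √(C₀ * √κ) / 4 := by
  have hE₀ : 0 ≤ energy 2 1 β (u 0) := energy_nonneg even_two zero_le_one hβ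
  have sqrt_β_le : √β ≤ √κ * ε ^ 2 := by
    rw [show ε ^ 4 = (ε ^ 2) ^ 2 by ring] at hβκ
    simpa only [Real.sqrt_mul' κ (sq_nonneg (ε ^ 2)), Real.sqrt_sq (sq_nonneg ε)] using
      Real.sqrt_le_sqrt hβκ
  have root_le : √(energy 2 1 β (u 0) * √β) ≤ √(C₀ * √κ) * ε := by
    calc √(energy 2 1 β (u 0) * √β) ≤ √(C₀ * (√κ * ε ^ 2)) :=
          Real.sqrt_le_sqrt (mul_le_mul hE sqrt_β_le (Real.sqrt_nonneg β) (hE₀.trans hE))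
      _ = √(C₀ * √κ) * ε := by
          rw [← mul_assoc, Real.sqrt_mul' _ (sq_nonneg ε), Real.sqrt_sq hε.le]
  have bound := (hu.mul_integral_tripleProductNorm_le_energy_two hK hε.le hβ hT).trans
    (mul_le_mul hE root_le (Real.sqrt_nonneg _) (hE₀.trans hE))
  refine le_of_mul_le_mul_left (bound.trans_eq ?_) (show 0 < 4 * ε by positivity)
  ring

theorem mul_integral_tripleProductNorm_le_mul_eps (hu : IsClassicalSolution A ε β K u)
    (hK : IsCompact K) (hε : 0 < ε) (hε₁ : ε ≤ 1) (hβ : 0 ≤ β) (hβκ : β ≤ κ * ε ^ 4)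
    (hA : |A| ≤ l) (hl : 0 < l) (hC₀ : 0 < C₀) (hE : energy 2 1 β (u 0) ≤ C₀)
    (hF : energy 4 (l ^ 2) (ε ^ 2) (u 0) ≤ l ^ 2 * C₀)
    (hεκ : ε * (κ * (6 + 16 * l ^ 2 * (C₀ + 2 * (l ^ 2 * C₀)))) ≤ 5) (hT : 0 ≤ T) :
    β * ∫ s in (0 : ℝ)..T, tripleProductNorm (u s) ≤ κ * l * C₀ * ε := by
  have small : β * (6 * ε + 16 * l ^ 2 * (energy 2 1 β (u 0) + 2 * (l ^ 2 * C₀))) ≤ 5 * ε ^ 3 := by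
    calc β * (6 * ε + 16 * l ^ 2 * (energy 2 1 β (u 0) + 2 * (l ^ 2 * C₀)))
        ≤ κ * ε ^ 4 * (6 * 1 + 16 * l ^ 2 * (C₀ + 2 * (l ^ 2 * C₀))) := by
          have := energy_nonneg (v := u 0) even_two zero_le_one hβ
          gcongr
          exact hβ.trans hβκ
      _ = ε * (κ * (6 + 16 * l ^ 2 * (C₀ + 2 * (l ^ 2 * C₀)))) * ε ^ 3 := by ring
      _ ≤ 5 * ε ^ 3 := by gcongr
  have bound := (hu.mul_integral_tripleProductNorm_le_energy_four hK hε hβ hA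
    (hF.trans_lt (lt_two_mul_self (by positivity))) small hT).trans hF
  have time_integral_nonneg : 0 ≤ ∫ s in (0 : ℝ)..T, tripleProductNorm (u s) :=
    intervalIntegral.integral_nonneg hT fun s _ => tripleProductNorm_nonneg
  have hκ : 0 ≤ κ := nonneg_of_mul_nonneg_left (hβ.trans hβκ) (by positivity)
  refine le_of_mul_le_mul_left ?_ hl
  calc l * (β * ∫ s in (0 : ℝ)..T, tripleProductNorm (u s))
      ≤ l * (κ * ε ^ 4 * ∫ s in (0 : ℝ)..T, tripleProductNorm (u s)) := by gcongr
    _ = κ * ε ^ 2 * (l * ε ^ 2 * ∫ s in (0 : ℝ)..T, tripleProductNorm (u s)) := by ring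
    _ ≤ κ * ε ^ 2 * (l ^ 2 * C₀) := mul_le_mul_of_nonneg_left bound (by positivity)
    _ = l * (κ * l * C₀ * (ε * ε)) := by ring
    _ ≤ l * (κ * l * C₀ * (1 * ε)) := by gcongr
    _ = l * (κ * l * C₀ * ε) := by rw [one_mul]

end IsClassicalSolution

end Evolution

end KudryashovSinelshchikov

open KudryashovSinelshchikov in
theorem stmt_13_general (A C₀ κ : ℝ) (hC₀ : 0 < C₀) (hκ : 0 < κ) :
    ∃ M : ℝ, 0 < M ∧
      ∀ (ε β : ℝ) (u : ℝ → ℝ → ℝ),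
        0 < ε → 0 ≤ β →
        ContDiff ℝ 3 (Function.uncurry u) →
        (∃ R : ℝ, ∀ t x : ℝ, R ≤ |x| → u t x = 0) →
        (∀ t : ℝ, 0 ≤ t → ∀ x : ℝ,
          deriv (fun τ => u τ x) t
            + A * u t x * deriv (u t) x
            + β * deriv (deriv (deriv (u t))) x
            - (2 * A / 3) * β * deriv (fun y => u t y * deriv (deriv (u t)) y) x
            - (-(A / 3)) * β * deriv (u t) x * deriv (deriv (u t)) x
            - ε * deriv (deriv (u t)) x = 0) →
        ((∫ x : ℝ, (u 0 x) ^ 2) + (∫ x : ℝ, (u 0 x) ^ 4)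
            + (β + ε ^ 2) * (∫ x : ℝ, (deriv (u 0) x) ^ 2) ≤ C₀) →
        β ≤ κ * ε ^ 4 →
        ∀ t : ℝ, 0 ≤ t →
          β * (∫ s in (0 : ℝ)..t,
            ∫ x : ℝ, |u s x| * |deriv (u s) x| * |deriv (deriv (u s)) x|) ≤ M * ε := by
  set l := |A| + 1
  set N := κ * (6 + 16 * l ^ 2 * (C₀ + 2 * (l ^ 2 * C₀)))
  set ε₀ := min 1 (5 / N)
  have hl : 1 ≤ l := le_add_of_nonneg_left (abs_nonneg A)
  have hN : 0 < N := by positivity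
  have hε₀ : 0 < ε₀ := lt_min one_pos (by positivity)
  refine ⟨κ * l * C₀ + C₀ * √(C₀ * √κ) / 4 / ε₀, by positivity,
    fun ε β u hε hβ hu ⟨R, hR⟩ hpde h₀ hβκ t ht => ?_⟩
  have hsol : IsClassicalSolution A ε β (Set.Icc (-R) R) u :=
    { contDiff := hu
      eq_zero := fun t x hx => hR t x (not_lt.1 fun h => hx (abs_le.1 h.le))
      deriv_eq := fun t ht x => by rw [ksOperator]; linarith [hpde t ht x] }
  have hE := energy_two_le_of_size_le h₀
  rw [add_mul]
  rcases le_total ε ε₀ with hsmall | hlarge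
  · refine (hsol.mul_integral_tripleProductNorm_le_mul_eps isCompact_Icc hε
      (hsmall.trans (min_le_left _ _)) hβ hβκ (le_add_of_nonneg_right zero_le_one)
      (by positivity) hC₀ hE (energy_four_le_of_size_le hβ hl h₀) ?_ ht).trans
      (le_add_of_nonneg_right (by positivity))
    exact (le_div_iff₀ hN).1 (hsmall.trans (min_le_right _ _))
  · refine (hsol.mul_integral_tripleProductNorm_le_const isCompact_Icc hε hβ hβκ hE ht).trans
      (le_add_of_nonneg_of_le (by positivity) ?_)
    rw [div_mul_eq_mul_div, le_div_iff₀ hε₀]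
    gcongr

/-- Estimate `β ∫₀ᵗ ‖u ∂ₓu ∂ₓ²u‖_{L¹} ds ≤ M ε`. -/
theorem stmt_13 (A C₀ : ℝ) (hA : A ≠ 0) (hC₀pos : 0 < C₀) :
    ∃ M : ℝ, 0 < M ∧
      ∀ (ε β : ℝ) (u : ℝ → ℝ → ℝ),
        0 < ε → 0 < β →
        ContDiff ℝ (⊤ : ℕ∞) (Function.uncurry u) →
        (∃ R > (0:ℝ), ∀ t x : ℝ, R ≤ |x| → u t x = 0) →
        (∀ t : ℝ, 0 ≤ t → ∀ x : ℝ,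
          deriv (fun τ => u τ x) t
            + A * u t x * deriv (u t) x
            + β * deriv (deriv (deriv (u t))) x
            - (2 * A / 3) * β * deriv (fun y => u t y * deriv (deriv (u t)) y) x
            - (-(A / 3)) * β * deriv (u t) x * deriv (deriv (u t)) x
            - ε * deriv (deriv (u t)) x = 0) →
        ((∫ x : ℝ, (u 0 x) ^ 2) + (∫ x : ℝ, (u 0 x) ^ 4)
            + (β + ε ^ 2) * (∫ x : ℝ, (deriv (u 0) x) ^ 2) ≤ C₀) →
        β ≤ ε ^ 4 / (Real.sqrt C₀ * A ^ 2) →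
        ∀ t : ℝ, 0 ≤ t →
          β * (∫ s in (0:ℝ)..t, ∫ x : ℝ, |u s x| * |deriv (u s) x| * |deriv (deriv (u s)) x|) ≤ M * ε := by
  obtain ⟨M, hM, bound⟩ := stmt_13_general A C₀ (1 / (√C₀ * A ^ 2)) hC₀pos (by positivity)
  exact ⟨M, hM, fun ε β u hε hβ hu ⟨R, _, hR⟩ hpde h₀ hβε => bound ε β u hε hβ.le
    (hu.of_le (by norm_cast)) ⟨R, hR⟩ hpde h₀ (hβε.trans_eq (by ring))⟩
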